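/- Let G be a connected graph of order n₁ ≥ 2 and let H be a graph of order n₂ ≥ 2. Let α be the number of connected components of H of order greater than one and let β be the number of isolated vertices of H. Then pd(G⊙H) ≤ pd(G) + n₂ - α if α ≥ 1 and β ≥ 1; pd(G⊙H) ≤ pd(G) + n₂ - α + 1 if α ≥ 1 and β = 0; and pd(G⊙H) ≤ pd(G) + n₂ if α = 0. -/

import Mathlib

/-!
Take a resolving partition of `G` with `pd(G)` cells, keep its cells on the base copy of `G`, and
colour all copies of `H` alike by a colouring `f` of `H`. The distance from a vertex of the copy of
`H` at `v` to a vertex `b` of the base is `d(v, b) + 1`, so the cells of `G` separate the vertices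
of the base from each other, and the copies of `H` from each other. Inside one copy, a vertex is at
distance one from a foreign colour exactly when it has a neighbour of that colour. Hence
`pd(G ⊙ H)` is at most `pd(G)` plus the number of colours of `f` as soon as equally coloured
vertices of `H` see different foreign colours.

To save colours, choose one vertex in each of several components of `H`, at most one of which is
trivial; give the chosen vertices a common colour and every other vertex a colour of its own. A
neighbour of a chosen vertex is not chosen, and no chosen vertex from another component sees its
private colour. Choosing from `k` components thus costs `n₂ - k + 1` colours, and the largest
possible `k` is `α + 1` if `H` has an isolated vertex and `α` otherwise.
-/

open SimpleGraph

/-- The corona product `G ⊙ H`: one copy of `G`, one copy of `H` for each vertex of `G`,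
with the `i`-th vertex of `G` joined to every vertex of the `i`-th copy of `H`. -/
def corona {α β : Type*} (G : SimpleGraph α) (H : SimpleGraph β) :
    SimpleGraph (α ⊕ α × β) :=
  SimpleGraph.fromRel (fun x y =>
    match x, y with
    | Sum.inl a, Sum.inl b => G.Adj a b
    | Sum.inl a, Sum.inr iu => a = iu.1
    | Sum.inr iu, Sum.inr jw => iu.1 = jw.1 ∧ H.Adj iu.2 jw.2
    | _, _ => False)

/-- The distance from a vertex to a set of vertices: `d(v,A) = min_{u ∈ A} d(v,u)`. -/
noncomputable def setDist {α : Type*} (G : SimpleGraph α) (v : α) (A : Set α) : ℕ :=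
  sInf (G.dist v '' A)

/-- `S` is a resolving set for `G`: distinct vertices have distinct metric representations. -/
def IsResolvingSet {α : Type*} (G : SimpleGraph α) (S : Set α) : Prop :=
  ∀ u v : α, (∀ w ∈ S, G.dist u w = G.dist v w) → u = v

/-- The metric dimension of `G`: minimum cardinality of a resolving set. -/
noncomputable def metricDim {α : Type*} (G : SimpleGraph α) : ℕ :=
  sInf {k | ∃ S : Set α, IsResolvingSet G S ∧ S.ncard = k}

/-- A family of sets is a resolving partition for `G` if it is a partition of the vertex set
into nonempty cells and distinct vertices have distinct partition representations. -/
def IsResolvingPartition {α : Type*} (G : SimpleGraph α) (P : Set (Set α)) : Prop :=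
  (∀ A ∈ P, A.Nonempty) ∧ (∀ v : α, ∃! A : Set α, A ∈ P ∧ v ∈ A) ∧
    ∀ u v : α, (∀ A ∈ P, setDist G u A = setDist G v A) → u = v

/-- The partition dimension of `G`: minimum number of cells in a resolving partition. -/
noncomputable def partitionDim {α : Type*} (G : SimpleGraph α) : ℕ :=
  sInf {t | ∃ P : Set (Set α), IsResolvingPartition G P ∧ P.ncard = t}

/-- `c(H)`: the maximum cardinality of a connected component of `H` which is isomorphic to a
complete graph (i.e. whose vertex set is a clique). -/
noncomputable def maxCompleteComp {β : Type*} (H : SimpleGraph β) : ℕ :=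
  sSup {k | ∃ C : H.ConnectedComponent, H.IsClique C.supp ∧ C.supp.ncard = k}

/-- `β(H)`: the number of isolated vertices of `H`. -/
noncomputable def numIsolated {β : Type*} (H : SimpleGraph β) : ℕ :=
  Set.ncard {v : β | ∀ u, ¬ H.Adj v u}

/-- `α(H)`: the number of connected components of `H` of order greater than one. -/
noncomputable def numBigComp {β : Type*} (H : SimpleGraph β) : ℕ :=
  Set.ncard {C : H.ConnectedComponent | 1 < C.supp.ncard}

section SetDist

variable {X : Type*} {D : SimpleGraph X} {v : X} {A : Set X}

lemma isLeast_setDist (D : SimpleGraph X) (v : X) (hA : A.Nonempty) :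
    IsLeast (D.dist v '' A) (setDist D v A) :=
  ⟨Nat.sInf_mem (hA.image _), fun _ => Nat.sInf_le⟩

lemma setDist_eq_zero_iff (hD : D.Connected) (hA : A.Nonempty) : setDist D v A = 0 ↔ v ∈ A := by
  rw [setDist, Nat.sInf_eq_zero, or_iff_left (hA.image _).ne_empty, Set.mem_image]
  simp only [hD.dist_eq_zero_iff, exists_eq_right']

lemma setDist_eq_one_iff (hD : D.Connected) (hv : v ∉ A) :
    setDist D v A = 1 ↔ ∃ x ∈ A, D.Adj v x := by
  constructor
  · intro h
    have hA : (D.dist v '' A).Nonempty := Nat.nonempty_of_sInf_eq_succ h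
    obtain ⟨x, hxA, hx⟩ := Nat.sInf_mem hA
    exact ⟨x, hxA, dist_eq_one_iff_adj.mp (hx.trans h)⟩
  · rintro ⟨x, hxA, hx⟩
    have hle : setDist D v A ≤ 1 :=
      (isLeast_setDist D v ⟨x, hxA⟩).2 ⟨x, hxA, dist_eq_one_iff_adj.mpr hx⟩
    have hne : setDist D v A ≠ 0 := mt (setDist_eq_zero_iff hD ⟨x, hxA⟩).mp hv
    omega

lemma le_add_dist_of_forall_adj (hD : D.Connected) {φ : X → ℕ}
    (hφ : ∀ x y, D.Adj x y → φ x ≤ φ y + 1) (x y : X) : φ x ≤ φ y + D.dist x y := by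
  obtain ⟨p, hp⟩ := hD.exists_walk_length_eq_dist x y
  rw [← hp]
  clear hp
  induction p with
  | nil => exact Nat.le_add_right _ _
  | cons h p ih =>
    have := hφ _ _ h
    rw [Walk.length_cons]
    omega

end SetDist

section ResolvingColoring

variable {X K : Type*} {D : SimpleGraph X} {c : X → K}

/-- A resolving partition presented by a colouring: the cells are the colour classes
`c ⁻¹' {c x}`, and distinct vertices have distinct vectors of distances to them. The colouring need
not be proper. -/
def IsResolvingColoring (D : SimpleGraph X) (c : X → K) : Prop :=
  ∀ u v, (∀ x, setDist D u (c ⁻¹' {c x}) = setDist D v (c ⁻¹' {c x})) → u = v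

lemma color_eq_of_setDist_eq (hD : D.Connected) {u v : X}
    (h : setDist D u (c ⁻¹' {c u}) = setDist D v (c ⁻¹' {c u})) : c u = c v := by
  have hu : (c ⁻¹' {c u}).Nonempty := ⟨u, rfl⟩
  exact ((setDist_eq_zero_iff hD hu).mp
    (h.symm.trans ((setDist_eq_zero_iff hD hu).mpr rfl))).symm

lemma isResolvingColoring_id (hD : D.Connected) : IsResolvingColoring D id :=
  fun u _ h => color_eq_of_setDist_eq hD (h u)

lemma IsResolvingColoring.isResolvingPartition (hc : IsResolvingColoring D c) :
    IsResolvingPartition D (Set.range fun x => c ⁻¹' {c x}) := by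
  refine ⟨?_, fun v => ⟨c ⁻¹' {c v}, ⟨⟨v, rfl⟩, rfl⟩, ?_⟩,
    fun u v h => hc u v fun x => h _ ⟨x, rfl⟩⟩
  · rintro _ ⟨x, rfl⟩
    exact ⟨x, rfl⟩
  · rintro _ ⟨⟨x, rfl⟩, hv : c v = c x⟩
    rw [hv]

lemma IsResolvingColoring.partitionDim_le (hc : IsResolvingColoring D c) :
    partitionDim D ≤ (Set.range c).ncard := by
  have hinj : (Set.range c).InjOn fun k => c ⁻¹' {k} := by
    rintro _ ⟨x, rfl⟩ k - h
    exact (Set.ext_iff.mp h x).mp rfl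
  refine Nat.sInf_le ⟨_, hc.isResolvingPartition, ?_⟩
  rw [← hinj.ncard_image, ← Set.range_comp]
  rfl

lemma IsResolvingPartition.exists_isResolvingColoring {P : Set (Set X)}
    (hP : IsResolvingPartition D P) :
    ∃ c : X → Set X, IsResolvingColoring D c ∧ Set.range c = P := by
  obtain ⟨hne, hcover, hres⟩ := hP
  choose cell hcell huniq using hcover
  have hfiber : ∀ A ∈ P, cell ⁻¹' {A} = A := fun A hA => by
    ext v
    exact ⟨fun h : cell v = A => h ▸ (hcell v).2, fun h => (huniq v A ⟨hA, h⟩).symm⟩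
  have hrange : Set.range cell = P := by
    refine (Set.range_subset_iff.mpr fun v => (hcell v).1).antisymm fun A hA => ?_
    obtain ⟨v, hv⟩ := hne A hA
    exact ⟨v, (huniq v A ⟨hA, hv⟩).symm⟩
  refine ⟨cell, fun u v h => hres u v fun A hA => ?_, hrange⟩
  obtain ⟨x, rfl⟩ := hrange.ge hA
  simpa only [hfiber _ hA] using h x

lemma exists_isResolvingColoring_ncard_eq (hD : D.Connected) :
    ∃ c : X → Set X, IsResolvingColoring D c ∧ (Set.range c).ncard = partitionDim D := by
  obtain ⟨P, hP, hcard⟩ : partitionDim D ∈ {t | ∃ P, IsResolvingPartition D P ∧ P.ncard = t} :=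
    Nat.sInf_mem ⟨_, _, (isResolvingColoring_id hD).isResolvingPartition, rfl⟩
  obtain ⟨c, hc, rfl⟩ := hP.exists_isResolvingColoring
  exact ⟨c, hc, hcard⟩

end ResolvingColoring

section Corona

variable {V W : Type*} {G : SimpleGraph V} {H : SimpleGraph W}

lemma corona_adj_inl_inl {a b : V} : (corona G H).Adj (.inl a) (.inl b) ↔ G.Adj a b := by
  simp only [corona, fromRel_adj, ne_eq, Sum.inl.injEq, G.adj_comm b a, or_self]
  exact and_iff_right_of_imp Adj.ne

lemma corona_adj_inl_inr {a : V} {p : V × W} :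
    (corona G H).Adj (.inl a) (.inr p) ↔ a = p.1 := by
  simp [corona]

lemma corona_adj_inr_inr {p q : V × W} :
    (corona G H).Adj (.inr p) (.inr q) ↔ p.1 = q.1 ∧ H.Adj p.2 q.2 := by
  simp only [corona, fromRel_adj, ne_eq, Sum.inr.injEq, H.adj_comm q.2 p.2, eq_comm (a := q.1),
    or_self]
  exact and_iff_right_of_imp fun h hpq => h.2.ne (congrArg Prod.snd hpq)

/-- The copy of `G` inside `G ⊙ H`. -/
def coronaBase (G : SimpleGraph V) (H : SimpleGraph W) : G →g corona G H where
  toFun := Sum.inl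
  map_rel' := corona_adj_inl_inl.mpr

lemma corona_connected (hG : G.Connected) : (corona G H).Connected := by
  obtain ⟨b⟩ := hG.nonempty
  have hbase (a : V) : (corona G H).Reachable (.inl b) (.inl a) := (hG b a).map (coronaBase G H)
  refine connected_iff_exists_forall_reachable _ |>.mpr ⟨.inl b, ?_⟩
  rintro (a | p)
  · exact hbase a
  · exact (hbase p.1).trans (corona_adj_inl_inr.mpr rfl).reachable

/-- The distance in `G ⊙ H` from a vertex to the vertex `b` of the copy of `G`, in closed form. -/
noncomputable def distToBase (G : SimpleGraph V) (b : V) : V ⊕ V × W → ℕ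
  | .inl a => G.dist a b
  | .inr p => G.dist p.1 b + 1

lemma distToBase_le_of_adj (hG : G.Connected) (b : V) (x y : V ⊕ V × W)
    (h : (corona G H).Adj x y) : distToBase G b x ≤ distToBase G b y + 1 := by
  rcases x with a | p <;> rcases y with a' | q <;> simp only [distToBase]
  · have htri : G.dist a b ≤ G.dist a a' + G.dist a' b := hG.dist_triangle
    rw [dist_eq_one_iff_adj.mpr (corona_adj_inl_inl.mp h)] at htri
    omega
  · rw [corona_adj_inl_inr.mp h]
    omega
  · rw [corona_adj_inl_inr.mp h.symm]
  · rw [(corona_adj_inr_inr.mp h).1]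
    omega

lemma dist_corona_inl_inl_le (hG : G.Connected) (a b : V) :
    (corona G H).dist (.inl a) (.inl b) ≤ G.dist a b := by
  obtain ⟨p, hp⟩ := hG.exists_walk_length_eq_dist a b
  rw [← hp, ← p.length_map (coronaBase G H)]
  exact dist_le (p.map (coronaBase G H))

lemma dist_corona_inl (hG : G.Connected) (x : V ⊕ V × W) (b : V) :
    (corona G H).dist x (.inl b) = distToBase G b x := by
  have hD : (corona G H).Connected := corona_connected hG
  apply le_antisymm
  · rcases x with a | p
    · exact dist_corona_inl_inl_le hG a b
    · calc (corona G H).dist (.inr p) (.inl b)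
          ≤ (corona G H).dist (.inr p) (.inl p.1) + (corona G H).dist (.inl p.1) (.inl b) :=
            hD.dist_triangle
        _ ≤ 1 + G.dist p.1 b :=
            add_le_add (dist_eq_one_iff_adj.mpr (corona_adj_inl_inr.mpr rfl).symm).le
              (dist_corona_inl_inl_le hG _ _)
        _ = distToBase G b (.inr p) := add_comm _ _
  · simpa only [distToBase, dist_self, zero_add] using
      le_add_dist_of_forall_adj hD (distToBase_le_of_adj hG b) x (.inl b)

lemma setDist_corona_inl (hG : G.Connected) (a : V) (A : Set V) :
    setDist (corona G H) (.inl a) (Sum.inl '' A) = setDist G a A := by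
  simp only [setDist, Set.image_image, dist_corona_inl hG, distToBase]

lemma setDist_corona_inr (hG : G.Connected) (p : V × W) {A : Set V} (hA : A.Nonempty) :
    setDist (corona G H) (.inr p) (Sum.inl '' A) = setDist G p.1 A + 1 := by
  have hsucc : Monotone fun n : ℕ => n + 1 := fun _ _ => Nat.succ_le_succ
  have hleast := hsucc.map_isLeast (isLeast_setDist G p.1 hA)
  rw [Set.image_image] at hleast
  simpa only [setDist, Set.image_image, dist_corona_inl hG, distToBase] using hleast.csInf_eq

lemma setDist_corona_inr_eq_one_iff (hG : G.Connected) {v : V} {w : W} {B : Set W} (hw : w ∉ B) :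
    setDist (corona G H) (.inr (v, w)) (Sum.inr '' (Prod.snd ⁻¹' B)) = 1 ↔
      ∃ x ∈ B, H.Adj w x := by
  have hout : (.inr (v, w) : V ⊕ V × W) ∉ Sum.inr '' (Prod.snd ⁻¹' B) := by simpa using hw
  rw [setDist_eq_one_iff (corona_connected hG) hout]
  simp [corona_adj_inr_inr]

end Corona

section CoronaColoring

variable {V W K L : Type*} {G : SimpleGraph V} {H : SimpleGraph W}

/-- The analogue of `IsResolvingColoring` in which only adjacency is seen, not distance: equally
coloured vertices with the same foreign colours in their neighbourhoods coincide. This is what a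
colouring of `H` has to satisfy in order to resolve each copy of `H` inside `G ⊙ H`. -/
def IsAdjResolvingColoring (H : SimpleGraph W) (f : W → L) : Prop :=
  ∀ w w', f w = f w' →
    (∀ x, f x ≠ f w → (f x ∈ f '' H.neighborSet w ↔ f x ∈ f '' H.neighborSet w')) → w = w'

lemma preimage_sumMap_singleton_inl (c : V → K) (g : W → L) (k : K) :
    Sum.map c g ⁻¹' {.inl k} = Sum.inl '' (c ⁻¹' {k}) := by
  ext (_ | _) <;> simp

lemma preimage_sumMap_singleton_inr (c : V → K) (g : W → L) (l : L) :
    Sum.map c g ⁻¹' {.inr l} = Sum.inr '' (g ⁻¹' {l}) := by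
  ext (_ | _) <;> simp

lemma setDist_corona_fiber_eq_one_iff (hG : G.Connected) {f : W → L} {v : V} {w : W} {l : L}
    (hl : l ≠ f w) :
    setDist (corona G H) (.inr (v, w)) (Sum.inr '' (f ∘ Prod.snd ⁻¹' {l})) = 1 ↔
      l ∈ f '' H.neighborSet w := by
  have hw : w ∉ f ⁻¹' {l} := hl.symm
  rw [Set.preimage_comp, setDist_corona_inr_eq_one_iff hG hw]
  exact exists_congr fun _ => and_comm

lemma IsResolvingColoring.corona_sumMap {c : V → K} {f : W → L} (hG : G.Connected)
    (hc : IsResolvingColoring G c) (hf : IsAdjResolvingColoring H f) :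
    IsResolvingColoring (corona G H) (Sum.map c (f ∘ Prod.snd)) := by
  intro x y hxy
  have hcolor := color_eq_of_setDist_eq (corona_connected hG) (hxy x)
  have hbase (v : V) := hxy (.inl v)
  simp only [Sum.map_inl, preimage_sumMap_singleton_inl] at hbase
  rcases x with a | ⟨a, w⟩ <;> rcases y with b | ⟨b, w'⟩
  · simp only [setDist_corona_inl hG] at hbase
    rw [hc a b hbase]
  · cases hcolor
  · cases hcolor
  · obtain rfl : a = b := hc a b fun v => by
      have hne : (c ⁻¹' {c v}).Nonempty := ⟨v, rfl⟩
      simpa only [setDist_corona_inr hG _ hne, Nat.add_right_cancel_iff] using hbase v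
    have hww' : f w = f w' := Sum.inr.inj hcolor
    obtain rfl : w = w' := hf w w' hww' fun z hz => by
      have hcopy := hxy (.inr (a, z))
      simp only [Sum.map_inr, preimage_sumMap_singleton_inr, Function.comp_apply] at hcopy
      rw [← setDist_corona_fiber_eq_one_iff hG hz, hcopy,
        setDist_corona_fiber_eq_one_iff hG (hww' ▸ hz)]
    rfl

lemma IsAdjResolvingColoring.partitionDim_corona_le {f : W → L} (hf : IsAdjResolvingColoring H f)
    (hG : G.Connected) :
    partitionDim (corona G H) ≤ partitionDim G + (Set.range f).ncard := by
  obtain ⟨c, hc, hcard⟩ := exists_isResolvingColoring_ncard_eq hG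
  have : Nonempty V := hG.nonempty
  calc partitionDim (corona G H)
      ≤ (Set.range (Sum.map c (f ∘ Prod.snd (α := V)))).ncard :=
        (hc.corona_sumMap hG hf).partitionDim_le
    _ = (Sum.inl '' Set.range c ∪ Sum.inr '' Set.range f).ncard := by
        rw [Sum.map, Set.Sum.elim_range, Set.range_comp, Set.range_comp,
          Prod.snd_surjective.range_comp]
    _ ≤ (Sum.inl '' Set.range c).ncard + (Sum.inr '' Set.range f).ncard := Set.ncard_union_le _ _
    _ = partitionDim G + (Set.range f).ncard := by
        rw [Set.ncard_image_of_injective _ Sum.inl_injective,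
          Set.ncard_image_of_injective _ Sum.inr_injective, hcard]

lemma partitionDim_corona_le_add_card (hG : G.Connected) :
    partitionDim (corona G H) ≤ partitionDim G + Nat.card W := by
  have hid : IsAdjResolvingColoring H id := fun _ _ hcolor _ => hcolor
  simpa only [Set.range_id, Set.ncard_univ] using hid.partitionDim_corona_le hG

end CoronaColoring

section Collapse

variable {V W : Type*} {G : SimpleGraph V} {H : SimpleGraph W} {S : Set W}

open Classical in
/-- The colouring which gives the vertices of `S` the common colour `none` and every other vertex a
colour of its own. -/
noncomputable def collapseColoring (S : Set W) (w : W) : Option W :=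
  if w ∈ S then none else some w

lemma collapseColoring_of_mem {w : W} (hw : w ∈ S) : collapseColoring S w = none := if_pos hw

lemma collapseColoring_of_notMem {w : W} (hw : w ∉ S) : collapseColoring S w = some w := if_neg hw

lemma collapseColoring_eq_some_iff {w x : W} : collapseColoring S w = some x ↔ w ∉ S ∧ w = x := by
  simp [collapseColoring]

lemma ncard_range_collapseColoring_le [Finite W] (S : Set W) :
    (Set.range (collapseColoring S)).ncard ≤ Sᶜ.ncard + 1 := by
  have hsub : Set.range (collapseColoring S) ⊆ insert none (some '' Sᶜ) := by
    rintro _ ⟨w, rfl⟩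
    by_cases hw : w ∈ S
    · exact .inl (collapseColoring_of_mem hw)
    · exact .inr ⟨w, hw, (collapseColoring_of_notMem hw).symm⟩
  calc (Set.range (collapseColoring S)).ncard
      ≤ (insert none (some '' Sᶜ)).ncard := Set.ncard_le_ncard hsub
    _ ≤ (some '' Sᶜ).ncard + 1 := Set.ncard_insert_le _ _
    _ = Sᶜ.ncard + 1 := by rw [Set.ncard_image_of_injective _ (Option.some_injective W)]

lemma isAdjResolvingColoring_collapseColoring (hS : S.InjOn fun w => H.neighborSet w \ S) :
    IsAdjResolvingColoring H (collapseColoring S) := by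
  intro w w' hcolor hnbr
  by_cases hw : w ∈ S
  · have hw' : w' ∈ S := by
      by_contra h
      rw [collapseColoring_of_mem hw, collapseColoring_of_notMem h] at hcolor
      cases hcolor
    have hprivate {x : W} (hx : x ∉ S) (u : W) :
        collapseColoring S x ∈ collapseColoring S '' H.neighborSet u ↔ x ∈ H.neighborSet u := by
      simp only [collapseColoring_of_notMem hx, Set.mem_image, collapseColoring_eq_some_iff]
      exact ⟨fun ⟨_, hy, _, hyx⟩ => hyx ▸ hy, fun h => ⟨x, h, hx, rfl⟩⟩
    refine hS hw hw' (Set.ext fun x => and_congr_left fun hx => ?_)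
    rw [← hprivate hx, ← hprivate hx]
    refine hnbr x ?_
    rw [collapseColoring_of_mem hw, collapseColoring_of_notMem hx]
    exact Option.some_ne_none x
  · rw [collapseColoring_of_notMem hw, eq_comm, collapseColoring_eq_some_iff] at hcolor
    exact hcolor.2.symm

lemma partitionDim_corona_le_of_injOn [Finite W] (hG : G.Connected)
    (hS : S.InjOn fun w => H.neighborSet w \ S) :
    partitionDim (corona G H) ≤ partitionDim G + (Sᶜ.ncard + 1) :=
  ((isAdjResolvingColoring_collapseColoring hS).partitionDim_corona_le hG).trans
    (Nat.add_le_add_left (ncard_range_collapseColoring_le S) _)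

end Collapse

section Components

variable {V W : Type*} {G : SimpleGraph V} {H : SimpleGraph W}

lemma subsingleton_supp_of_isIsolated {w : W} (hw : H.IsIsolated w) :
    (H.connectedComponentMk w).supp.Subsingleton := by
  refine Set.subsingleton_of_forall_eq w fun u hu => ?_
  obtain ⟨p⟩ := (ConnectedComponent.exact hu).symm
  cases p with
  | nil => rfl
  | cons h _ => exact absurd h (hw _)

lemma injOn_neighborSet_sdiff_of_represents {T : Set W} {𝒞 : Set H.ConnectedComponent}
    (hT : ConnectedComponent.Represents T 𝒞)
    (h𝒞 : {C ∈ 𝒞 | C.supp.Subsingleton}.Subsingleton) :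
    T.InjOn fun w => H.neighborSet w \ T := by
  intro w hw w' hw' (hnbr : H.neighborSet w \ T = H.neighborSet w' \ T)
  have hout {u x : W} (hu : u ∈ T) (hux : H.Adj u x) : x ∈ H.neighborSet u \ T :=
    ⟨hux, fun hx => hux.ne (hT.injOn hu hx (ConnectedComponent.sound hux.reachable))⟩
  apply hT.injOn hw hw'
  by_cases hiso : H.IsIsolated w ∧ H.IsIsolated w'
  · exact h𝒞 ⟨hT.mapsTo hw, subsingleton_supp_of_isIsolated hiso.1⟩
      ⟨hT.mapsTo hw', subsingleton_supp_of_isIsolated hiso.2⟩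
  · obtain ⟨x, hx, hx'⟩ : ∃ x, H.Adj w x ∧ H.Adj w' x := by
      rw [not_and_or, ← exists_adj_iff_not_isIsolated, ← exists_adj_iff_not_isIsolated] at hiso
      rcases hiso with ⟨x, hx⟩ | ⟨x, hx⟩
      · exact ⟨x, hx, (hnbr.le (hout hw hx)).1⟩
      · exact ⟨x, (hnbr.ge (hout hw' hx)).1, hx⟩
    exact ConnectedComponent.sound (hx.reachable.trans hx'.symm.reachable)

lemma partitionDim_corona_add_ncard_le [Finite W] (hG : G.Connected)
    {𝒞 : Set H.ConnectedComponent} (h𝒞 : {C ∈ 𝒞 | C.supp.Subsingleton}.Subsingleton) :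
    partitionDim (corona G H) + 𝒞.ncard ≤ partitionDim G + Nat.card W + 1 := by
  have hT := ConnectedComponent.Represents.image_out 𝒞
  have hle := partitionDim_corona_le_of_injOn hG (injOn_neighborSet_sdiff_of_represents hT h𝒞)
  have hcard := Set.ncard_add_ncard_compl (Quot.out '' 𝒞)
  rw [hT.ncard_eq] at hcard
  omega

lemma partitionDim_corona_add_numBigComp_le [Finite W] (hG : G.Connected) :
    partitionDim (corona G H) + numBigComp H ≤ partitionDim G + Nat.card W + 1 :=
  partitionDim_corona_add_ncard_le hG fun _ hC =>
    absurd hC.2 (Set.one_lt_ncard_iff_nontrivial.mp hC.1).not_subsingleton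

lemma partitionDim_corona_add_numBigComp_le_of_isIsolated [Finite W] (hG : G.Connected) {w : W}
    (hw : H.IsIsolated w) :
    partitionDim (corona G H) + numBigComp H ≤ partitionDim G + Nat.card W := by
  let C₀ := H.connectedComponentMk w
  have hbig {C : H.ConnectedComponent} (hC : 1 < C.supp.ncard) : ¬ C.supp.Subsingleton :=
    (Set.one_lt_ncard_iff_nontrivial.mp hC).not_subsingleton
  have hnotMem : C₀ ∉ {C : H.ConnectedComponent | 1 < C.supp.ncard} := fun h =>
    hbig h (subsingleton_supp_of_isIsolated hw)
  have hle := partitionDim_corona_add_ncard_le hG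
    (𝒞 := insert C₀ {C : H.ConnectedComponent | 1 < C.supp.ncard}) <|
      Set.subsingleton_of_forall_eq C₀ fun C hC => hC.1.resolve_right fun h => hbig h hC.2
  rw [Set.ncard_insert_of_notMem hnotMem] at hle
  exact Nat.le_of_succ_le_succ hle

end Components

/-- For a connected graph `G` of order `n₁ ≥ 2` and a graph `H` of order `n₂ ≥ 2`,
with `a` the number of components of `H` of order greater than one and `b` the number of
isolated vertices of `H`: `pd(G⊙H) ≤ pd(G)+n₂-a` if `a ≥ 1` and `b ≥ 1`;
`pd(G⊙H) ≤ pd(G)+n₂-a+1` if `a ≥ 1` and `b = 0`; and `pd(G⊙H) ≤ pd(G)+n₂` if `a = 0`. -/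
theorem stmt2 {V W : Type*} [Fintype V] [Fintype W] (G : SimpleGraph V) (H : SimpleGraph W)
    (n₂ a b : ℕ) (h₁ : 2 ≤ Fintype.card V) (hn₂ : Fintype.card W = n₂) (h₂ : 2 ≤ n₂)
    (hG : G.Connected) (ha : a = numBigComp H) (hb : b = numIsolated H) :
    (1 ≤ a → 1 ≤ b → partitionDim (corona G H) ≤ partitionDim G + n₂ - a) ∧
    (1 ≤ a → b = 0 → partitionDim (corona G H) ≤ partitionDim G + n₂ - a + 1) ∧
    (a = 0 → partitionDim (corona G H) ≤ partitionDim G + n₂) := by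
  subst hn₂ ha hb
  rw [← Nat.card_eq_fintype_card]
  refine ⟨fun _ hb => ?_, fun _ _ => ?_, fun _ => ?_⟩
  · obtain ⟨w, hw⟩ : ∃ w, H.IsIsolated w := Set.nonempty_of_ncard_ne_zero (Nat.ne_of_gt hb)
    exact Nat.le_sub_of_add_le (partitionDim_corona_add_numBigComp_le_of_isIsolated hG hw)
  · have hle := partitionDim_corona_add_numBigComp_le (H := H) hG
    omega
  · exact partitionDim_corona_le_add_card hG
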